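/- arXiv:2510.07643 — 3 statements merged into one kernel-verified Lean document; each statement's English description precedes it below -/
import Mathlib

section
/- For any coprime positive integers a and u with a ≠ u, the cuboid polynomial P_{a,u}(t) does not admit any factorization in ℤ[t] as a product of two degree-2 polynomials and a degree-4 polynomial, nor as a product of four degree-2 polynomials, nor as a product of two degree-3 polynomials and a degree-2 polynomial. -/
open Polynomial

/-- The cuboid polynomial `P_{a,u}(t) = t⁸ + 6Δ t⁶ + (Δ² − 2a²u²) t⁴ − 6Δ a²u² t² + a⁴u⁴`,
where `Δ = u² − a²`. -/
noncomputable def cuboidPoly (a u : ℤ) : Polynomial ℤ :=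
  X ^ 8 + C (6 * (u ^ 2 - a ^ 2)) * X ^ 6
    + C ((u ^ 2 - a ^ 2) ^ 2 - 2 * a ^ 2 * u ^ 2) * X ^ 4
    + C (-(6 * (u ^ 2 - a ^ 2) * (a ^ 2 * u ^ 2))) * X ^ 2
    + C (a ^ 4 * u ^ 4)


lemma cub_two_mul_sq (x y : ℚ) (h : x ^ 2 = 2 * y ^ 2) : y = 0 := by
  by_contra hy
  have h2 : (x / y) ^ 2 = 2 := by field_simp; linarith
  have : IsSquare (2 : ℚ) := ⟨x / y, by rw [← h2]; ring⟩
  have h3 := (Rat.isSquare_iff.mp this).1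
  norm_num at h3

lemma cub_parity_sq (x : ℤ) : (x % 2 = 0 ∧ (x ^ 2 % 8 = 0 ∨ x ^ 2 % 8 = 4)) ∨ (x % 2 = 1 ∧ x ^ 2 % 8 = 1) := by
  have h : x % 8 = 0 ∨ x % 8 = 1 ∨ x % 8 = 2 ∨ x % 8 = 3 ∨ x % 8 = 4 ∨ x % 8 = 5 ∨ x % 8 = 6 ∨ x % 8 = 7 := by omega
  rcases h with h | h | h | h | h | h | h | h <;> simp [pow_two, Int.mul_emod, h] <;> omega

lemma cub_four {p q P Q : ℤ} (hp : p ≠ 0) (h : P * Q = p * q) :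
    ∃ α β γ δ : ℤ, p = α * β ∧ q = γ * δ ∧ P = α * γ ∧ Q = β * δ := by
  have hd : p ∣ P * Q := ⟨q, h⟩
  obtain ⟨α, β, ⟨γ, hγ⟩, ⟨δ, hδ⟩, hab⟩ := exists_dvd_and_dvd_of_dvd_mul hd
  refine ⟨α, β, γ, δ, hab, ?_, hγ, hδ⟩
  apply mul_left_cancel₀ hp
  rw [← h, hγ, hδ, hab]; ring

/-- Pythagorean parametrization with odd first leg and `p` odd. -/
lemma cub_pyth {w T S : ℤ} (h : S ^ 2 = T ^ 2 + w ^ 2) (hc : IsCoprime S T) (hS : 0 < S)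
    (hw : w % 2 = 1) :
    ∃ p q : ℤ, T = 2 * p * q ∧ S = p ^ 2 + q ^ 2 ∧ IsCoprime p q ∧ p % 2 = 1 ∧ q % 2 = 0 := by
  have hpt : PythagoreanTriple w T S := by unfold PythagoreanTriple; linarith
  have hg : Int.gcd w T = 1 := by
    rw [← Int.isCoprime_iff_gcd_eq_one]
    have h1 : IsCoprime (S ^ 2) T := hc.pow_left
    have h2 : IsCoprime (w ^ 2) T := by
      have : w ^ 2 = S ^ 2 + T * (-T) := by linarith
      rw [this]; exact h1.add_mul_left_left _
    exact (IsCoprime.pow_left_iff (by norm_num)).mp h2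
  obtain ⟨m, n, h1, h2, h3, h4, h5, h6⟩ := hpt.coprime_classification' hg hw hS
  rw [← Int.isCoprime_iff_gcd_eq_one] at h4
  rcases h5 with h5 | h5
  · exact ⟨n, m, by rw [h2]; ring, by rw [h3]; ring, h4.symm, h5.2, h5.1⟩
  · exact ⟨m, n, h2, h3, h4, h5.1, h5.2⟩

lemma cub_dvd_three {h : ℤ} (hd : h ∣ 3) : h = 1 ∨ h = -1 ∨ h = 3 ∨ h = -3 := by
  have h1 := Int.le_of_dvd (by norm_num) hd
  have h2 := Int.le_of_dvd (by norm_num) ((neg_dvd).mpr hd)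
  have : -3 ≤ h := by omega
  interval_cases h <;> first | omega | (exfalso; revert hd; decide)

lemma cub_D : ∀ N : ℕ, ∀ S T w v : ℤ, T.natAbs = N → T ≠ 0 → IsCoprime S T →
    S ^ 2 = T ^ 2 + w ^ 2 → S ^ 2 = 4 * T ^ 2 + v ^ 2 → False := by
  intro N
  induction N using Nat.strong_induction_on with
  | _ N ih =>
  intro S T w v hN hT hc hw hv
  wlog hS : 0 < S generalizing S with H
  · have hS0 : S ≠ 0 := by
      rintro rfl
      have : T ^ 2 = 0 := by nlinarith [sq_nonneg T, sq_nonneg v]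
      exact hT (by simpa using this)
    exact H (-S) hc.neg_left (by linarith [neg_sq S]) (by linarith [neg_sq S]) (by omega)
  have par : S % 2 = 1 ∧ T % 2 = 0 ∧ w % 2 = 1 ∧ v % 2 = 1 := by
    have h2 : ¬ (S % 2 = 0 ∧ T % 2 = 0) := by
      rintro ⟨h1, h2⟩
      have := hc.isUnit_of_dvd' (Int.dvd_of_emod_eq_zero h1) (Int.dvd_of_emod_eq_zero h2)
      exact absurd this (by decide)
    rcases cub_parity_sq S with h | h <;> rcases cub_parity_sq T with h' | h' <;>
    rcases cub_parity_sq w with h'' | h'' <;> rcases cub_parity_sq v with h''' | h''' <;> omega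
  obtain ⟨hS1, hT1, hw1, hv1⟩ := par
  have hc2 : IsCoprime S (2 * T) := by
    refine IsCoprime.mul_right ?_ hc
    exact ⟨1, -(S / 2), by omega⟩
  obtain ⟨p, q, e1, e2, c1, p1, q1⟩ := cub_pyth hw hc hS hw1
  obtain ⟨P, Q, E1, E2, C1, P1, Q1⟩ := cub_pyth (T := 2 * T) (by linarith [mul_pow 2 T 2]) hc2 hS hv1
  obtain ⟨Q', rfl⟩ : (2 : ℤ) ∣ Q := Int.dvd_of_emod_eq_zero Q1
  have hp0 : p ≠ 0 := by rintro rfl; omega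
  obtain ⟨α, β, γ, δ, rfl, rfl, rfl, rfl⟩ := cub_four (P := P) (Q := Q') (q := q) hp0 (by linarith)
  have key : β ^ 2 * (α ^ 2 - 4 * δ ^ 2) = γ ^ 2 * (α ^ 2 - δ ^ 2) := by linarith
  have cβγ : IsCoprime β γ := (c1.of_mul_left_right).of_mul_right_left
  have cαδ : IsCoprime α δ := (C1.of_mul_left_left).of_mul_right_right.of_mul_right_right
  have hβ0 : β ≠ 0 := by rintro rfl; simp at hp0
  have hγ0 : γ ≠ 0 := by rintro rfl; simp at P1
  have hδ0 : δ ≠ 0 := by rintro rfl; simp at e1; exact hT e1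
  have hα0 : α ≠ 0 := by rintro rfl; simp at P1
  have c2 : IsCoprime (γ ^ 2) (β ^ 2) := cβγ.symm.pow
  obtain ⟨h, hh⟩ : γ ^ 2 ∣ α ^ 2 - 4 * δ ^ 2 := c2.dvd_of_dvd_mul_left ⟨_, key⟩
  have hh2 : α ^ 2 - δ ^ 2 = β ^ 2 * h := by
    apply mul_left_cancel₀ (pow_ne_zero 2 hγ0)
    rw [← key, hh]; ring
  have hd3 : h ∣ 3 := by
    have d1 : h ∣ 3 * α ^ 2 := ⟨4 * β ^ 2 - γ ^ 2, by linear_combination 4 * hh2 - hh⟩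
    have d2 : h ∣ 3 * δ ^ 2 := ⟨β ^ 2 - γ ^ 2, by linear_combination hh2 - hh⟩
    obtain ⟨s, t, hst⟩ : IsCoprime (α ^ 2) (δ ^ 2) := cαδ.pow
    have := dvd_add (d1.mul_left s) (d2.mul_left t)
    have e : s * (3 * α ^ 2) + t * (3 * δ ^ 2) = 3 := by linear_combination 3 * hst
    rwa [e] at this
  have oα : α % 2 = 1 := by
    rcases Int.emod_two_eq_zero_or_one α with h0 | h0
    · simp [Int.mul_emod, h0] at p1
    · exact h0
  have oγ : γ % 2 = 1 := by
    rcases Int.emod_two_eq_zero_or_one γ with h0 | h0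
    · simp [Int.mul_emod, h0] at P1
    · exact h0
  have oδ : δ % 2 = 0 := by
    rcases Int.emod_two_eq_zero_or_one δ with h0 | h0
    · exact h0
    · simp [Int.mul_emod, h0, oγ] at q1
  have h1 : h = 1 := by
    have a1 := cub_parity_sq α
    have a2 := cub_parity_sq γ
    have a3 := cub_parity_sq δ
    rcases cub_dvd_three hd3 with rfl | rfl | rfl | rfl <;> omega
  subst h1
  refine ih δ.natAbs ?_ α δ β γ rfl hδ0 cαδ (by linarith) (by linarith)
  rw [← hN, e1]
  simp only [Int.natAbs_mul]
  have b1 := Int.natAbs_pos.mpr hα0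
  have b2 := Int.natAbs_pos.mpr hβ0
  have b3 := Int.natAbs_pos.mpr hγ0
  have b4 := Int.natAbs_pos.mpr hδ0
  have : 0 < α.natAbs * β.natAbs * γ.natAbs := by positivity
  have e : (2 : ℤ).natAbs = 2 := rfl
  rw [e]
  nlinarith [Nat.mul_le_mul this b4, Nat.mul_le_mul_right δ.natAbs this]

/-- if `m n = k²` with `gcd(m,n) ∣ 3` then `m, n` are `±□` or `±3□` simultaneously. -/
lemma cub_split {m n k : ℤ} (hk : m * n = k ^ 2) (hm : m ≠ 0)
    (hg : ∀ d : ℤ, d ∣ m → d ∣ n → d ∣ 3) :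
    ∃ e r s : ℤ, (e = 1 ∨ e = -1 ∨ e = 3 ∨ e = -3) ∧ m = e * r ^ 2 ∧ n = e * s ^ 2 := by
  have aux : ∀ m n k : ℤ, m * n = k ^ 2 → m ≠ 0 → IsCoprime m n →
      ∃ e r s : ℤ, (e = 1 ∨ e = -1) ∧ m = e * r ^ 2 ∧ n = e * s ^ 2 := by
    intro m n k hk hm hc
    obtain ⟨r, hr⟩ := Int.sq_of_isCoprime hc hk
    obtain ⟨s, hs⟩ := Int.sq_of_isCoprime hc.symm (by rw [mul_comm]; exact hk)
    have hr0 : 0 < r ^ 2 := by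
      have : r ≠ 0 := by rintro rfl; simp at hr; exact hm hr
      positivity
    rcases hr with hr | hr <;> rcases hs with hs | hs
    · exact ⟨1, r, s, by simp, by linarith, by linarith⟩
    · refine ⟨1, r, s, by simp, by linarith, ?_⟩
      have : s ^ 2 = 0 := by
        rw [hr, hs] at hk; nlinarith [sq_nonneg k, sq_nonneg s]
      linarith
    · refine ⟨-1, r, s, by simp, by linarith, ?_⟩
      have : s ^ 2 = 0 := by
        rw [hr, hs] at hk; nlinarith [sq_nonneg k, sq_nonneg s]
      linarith
    · exact ⟨-1, r, s, by simp, by linarith, by linarith⟩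
  by_cases h3 : (3 : ℤ) ∣ m ∧ (3 : ℤ) ∣ n
  · obtain ⟨⟨m', rfl⟩, ⟨n', rfl⟩⟩ := h3
    have : (3 : ℤ) ∣ k := by
      have : (3 : ℤ) ∣ k ^ 2 := ⟨m' * (3 * n'), by linarith⟩
      exact Int.prime_three.dvd_of_dvd_pow this
    obtain ⟨k', rfl⟩ := this
    obtain ⟨e, r, s, he, h1, h2⟩ := aux m' n' k' (by linarith) (by rintro rfl; simp at hm) (by
      rw [Int.isCoprime_iff_gcd_eq_one]
      have d1 : (3 * (Int.gcd m' n' : ℤ)) ∣ 3 * m' := mul_dvd_mul_left 3 (Int.gcd_dvd_left _ _)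
      have d2 : (3 * (Int.gcd m' n' : ℤ)) ∣ 3 * n' := mul_dvd_mul_left 3 (Int.gcd_dvd_right _ _)
      have d := Int.le_of_dvd (by norm_num) (hg _ d1 d2)
      have : Int.gcd m' n' ≠ 0 := by
        intro h0; rw [Int.gcd_eq_zero_iff] at h0; simp [h0.1] at hm
      omega)
    exact ⟨3 * e, r, s, by omega, by rw [h1]; ring, by rw [h2]; ring⟩
  · obtain ⟨e, r, s, he, h1, h2⟩ := aux m n k hk hm (by
      rw [Int.isCoprime_iff_gcd_eq_one]
      have d1 : (Int.gcd m n : ℤ) ∣ m := Int.gcd_dvd_left _ _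
      have d2 : (Int.gcd m n : ℤ) ∣ n := Int.gcd_dvd_right _ _
      rcases cub_dvd_three (hg _ d1 d2) with h | h | h | h
      · omega
      · omega
      · rw [h] at d1 d2; exact absurd ⟨d1, d2⟩ h3
      · omega)
    exact ⟨e, r, s, by omega, h1, h2⟩

lemma cub_sqpair {m n w : ℤ} (hm : 0 < m) (hn : 0 < n) (hc : IsCoprime m n) (h : m * n = w ^ 2) :
    ∃ r s : ℤ, m = r ^ 2 ∧ n = s ^ 2 ∧ r * s = w := by
  obtain ⟨r, hr⟩ := Int.sq_of_isCoprime hc h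
  obtain ⟨s, hs⟩ := Int.sq_of_isCoprime hc.symm (by rw [mul_comm]; exact h)
  have hr' : m = r ^ 2 := by rcases hr with h | h; exact h; nlinarith [sq_nonneg r]
  have hs' : n = s ^ 2 := by rcases hs with h | h; exact h; nlinarith [sq_nonneg s]
  have : (r * s) ^ 2 = w ^ 2 := by rw [← h, hr', hs']; ring
  rcases sq_eq_sq_iff_eq_or_eq_neg.mp this with h | h
  · exact ⟨r, s, hr', hs', h⟩
  · exact ⟨-r, s, by rw [hr']; ring, hs', by linarith⟩

lemma cub_gcd3 {x y : ℤ} (hc : IsCoprime x y) {d : ℤ} (h1 : d ∣ 3 * x ^ 2) (h2 : d ∣ 3 * y ^ 2) : d ∣ 3 := by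
  obtain ⟨s, t, hst⟩ : IsCoprime (x ^ 2) (y ^ 2) := hc.pow
  have := dvd_add (h1.mul_left s) (h2.mul_left t)
  have e : s * (3 * x ^ 2) + t * (3 * y ^ 2) = 3 := by linear_combination 3 * hst
  rwa [e] at this

lemma cub_quartic_coprime {x y z : ℤ} (hx : x ≠ 0) (hy : y ≠ 0) (hc : IsCoprime x y)
    (h : x ^ 4 + 34 * x ^ 2 * y ^ 2 + y ^ 4 = z ^ 2) : x ^ 2 = y ^ 2 := by
  wlog hz : 0 ≤ z generalizing z with H
  · exact H (z := -z) (by rw [h]; ring) (by omega)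
  have hx2 : 0 < x ^ 2 := by positivity
  have hy2 : 0 < y ^ 2 := by positivity
  have hxy2 : 0 < x ^ 2 * y ^ 2 := by positivity
  have hprod : (z - (x ^ 2 + y ^ 2)) * (z + (x ^ 2 + y ^ 2)) = 32 * (x * y) ^ 2 := by
    linear_combination -h
  have hlt : x ^ 2 + y ^ 2 < z := by nlinarith
  have cs : IsCoprime (x ^ 2 + y ^ 2) ((x * y) ^ 2) := by
    refine IsCoprime.pow_right (IsCoprime.mul_right ?_ ?_)
    · have : IsCoprime (y ^ 2) x := hc.symm.pow_left
      have e : x ^ 2 + y ^ 2 = y ^ 2 + x * x := by ring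
      rw [e]; exact this.add_mul_left_left _
    · have : IsCoprime (x ^ 2) y := hc.pow_left
      have e : x ^ 2 + y ^ 2 = x ^ 2 + y * y := by ring
      rw [e]; exact this.add_mul_left_left _
  have npar : ¬ (x % 2 = 0 ∧ y % 2 = 0) := by
    rintro ⟨h1, h2⟩
    have := hc.isUnit_of_dvd' (Int.dvd_of_emod_eq_zero h1) (Int.dvd_of_emod_eq_zero h2)
    exact absurd this (by decide)
  have px := cub_parity_sq x
  have py := cub_parity_sq y
  by_cases hodd : x % 2 = 1 ∧ y % 2 = 1
  · -- both odd
    obtain ⟨ox, oy⟩ := hodd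
    obtain ⟨g, hg⟩ : (2 : ℤ) ∣ x ^ 2 + y ^ 2 := by omega
    have hz2 : z % 2 = 0 := by
      rcases cub_parity_sq z with h' | h'
      · exact h'.1
      · exfalso
        have : z ^ 2 = 4 * g ^ 2 + 32 * (x * y) ^ 2 := by
          linear_combination -h + (x ^ 2 + y ^ 2 + 2 * g) * hg
        omega
    obtain ⟨z', rfl⟩ := Int.dvd_of_emod_eq_zero hz2
    have hgz : z' ^ 2 = g ^ 2 + 8 * (x * y) ^ 2 := by
      rw [hg] at hprod; linarith
    have og : g % 2 = 1 := by omega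
    have oz : z' % 2 = 1 := by
      have := cub_parity_sq z'
      have := cub_parity_sq g
      omega
    obtain ⟨m, hm⟩ : (2 : ℤ) ∣ z' - g := by omega
    obtain ⟨n, hn⟩ : (2 : ℤ) ∣ z' + g := by omega
    have hmn : m * n = 2 * (x * y) ^ 2 := by
      have : (2 * m) * (2 * n) = 8 * (x * y) ^ 2 := by rw [← hm, ← hn]; linarith
      linarith
    have hgn : g = n - m := by omega
    have cg : IsCoprime g ((x * y) ^ 2) := by rw [hg] at cs; exact cs.of_mul_left_right
    have cg2 : IsCoprime g 2 := ⟨1, -(g / 2), by omega⟩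
    have cg3 : IsCoprime g (m * n) := by rw [hmn]; exact cg2.mul_right cg
    have cmn : IsCoprime m n := by
      have : IsCoprime (n - m) m := by rw [← hgn]; exact cg3.of_mul_right_left
      have := this.add_mul_left_left 1
      simp at this; exact this.symm
    have mpos : 0 < m := by omega
    have npos : 0 < n := by
      have : 0 < g := by omega
      omega
    have oxy : (x * y) ^ 2 % 8 = 1 := by
      rcases cub_parity_sq (x * y) with h' | h'
      · have := h'.1; simp [Int.mul_emod, ox, oy] at this
      · exact h'.2
    rcases Int.emod_two_eq_zero_or_one m with m2 | m2
    · exfalso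
      obtain ⟨m', rfl⟩ := Int.dvd_of_emod_eq_zero m2
      obtain ⟨r, s, hr, hs, hrs⟩ := cub_sqpair (m := m') (n := n) (w := x * y) (by omega) npos
        (cmn.of_mul_left_right) (by linarith)
      have r2 : r % 2 = 1 := by
        rcases Int.emod_two_eq_zero_or_one r with h' | h'
        · rcases cub_parity_sq (x * y) with h2 | h2
          · omega
          · have := h2.1
            rw [← hrs] at this
            simp [Int.mul_emod, h'] at this
        · exact h'
      have s2 : s % 2 = 1 := by
        rcases Int.emod_two_eq_zero_or_one s with h' | h'
        · rcases cub_parity_sq (x * y) with h2 | h2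
          · omega
          · have := h2.1
            rw [← hrs] at this
            simp [Int.mul_emod, h'] at this
        · exact h'
      have := cub_parity_sq r
      have := cub_parity_sq s
      omega
    · have n2 : n % 2 = 0 := by
        rcases Int.emod_two_eq_zero_or_one n with n2 | n2
        · exact n2
        · have : (m * n) % 2 = 1 := by simp [Int.mul_emod, m2, n2]
          omega
      obtain ⟨n', rfl⟩ := Int.dvd_of_emod_eq_zero n2
      obtain ⟨s, r, hs, hr, hrs⟩ := cub_sqpair (m := m) (n := n') (w := x * y) mpos (by omega)
        (cmn.of_mul_right_right) (by linarith)
      have hsum : x ^ 2 + y ^ 2 = 4 * r ^ 2 - 2 * s ^ 2 := by linarith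
      have csr : IsCoprime s r := by
        have := cmn.of_mul_right_right
        rw [hs, hr] at this
        exact (IsCoprime.pow_iff (by norm_num) (by norm_num)).mp this
      have hpp : (4 * r ^ 2 - s ^ 2) * (r ^ 2 - s ^ 2) * 4 = (x ^ 2 - y ^ 2) ^ 2 := by
        have : (x ^ 2 - y ^ 2) ^ 2 = (x ^ 2 + y ^ 2) ^ 2 - 4 * (x * y) ^ 2 := by ring
        rw [this, hsum, ← hrs]; ring
      by_contra hne
      have ps := cub_parity_sq s
      have pr := cub_parity_sq r
      have prs : s % 2 = 1 ∧ r % 2 = 1 := by omega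
      obtain ⟨k, hk⟩ : (2 : ℤ) ∣ x ^ 2 - y ^ 2 := by omega
      obtain ⟨e, A, B, he, hA, hB⟩ := cub_split (m := 4 * r ^ 2 - s ^ 2) (n := r ^ 2 - s ^ 2) (k := k)
        (by rw [hk] at hpp; linarith) (by omega) (by
          intro d d1 d2
          apply cub_gcd3 csr
          · have := dvd_sub d1 (d2.mul_left 4)
            have e : 4 * r ^ 2 - s ^ 2 - 4 * (r ^ 2 - s ^ 2) = 3 * s ^ 2 := by ring
            rwa [e] at this
          · have := dvd_sub d1 d2
            have e : 4 * r ^ 2 - s ^ 2 - (r ^ 2 - s ^ 2) = 3 * r ^ 2 := by ring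
            rwa [e] at this)
      have pA := cub_parity_sq A
      have e3 : e = 3 := by
        rcases he with rfl | rfl | rfl | rfl <;> omega
      subst e3
      have hB0 : B ≠ 0 := by
        rintro rfl
        apply hne
        have : r ^ 2 - s ^ 2 = 0 := by linarith
        rw [this] at hpp
        have : (x ^ 2 - y ^ 2) = 0 := by
          apply pow_eq_zero_iff (two_ne_zero) |>.mp; linarith
        linarith
      have cAB : IsCoprime A B := by
        -- A² - B² = r², A² - 4 B² = s²
        have c2 : IsCoprime (s ^ 2) (r ^ 2) := csr.pow
        obtain ⟨i, j, hij⟩ := c2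
        have : IsCoprime (A ^ 2) (B ^ 2) :=
          ⟨i + j, -4 * i - j, by
            have e1 : s ^ 2 = A ^ 2 - 4 * B ^ 2 := by linarith
            have e2 : r ^ 2 = A ^ 2 - B ^ 2 := by linarith
            rw [e1, e2] at hij; linarith⟩
        exact (IsCoprime.pow_iff (by norm_num) (by norm_num)).mp this
      exact cub_D _ A B r s rfl hB0 cAB (by linarith) (by linarith)
  · -- one even
    exfalso
    have exy : (x * y) % 2 = 0 := by
      rcases Int.emod_two_eq_zero_or_one x with h' | h'
      · simp [Int.mul_emod, h']
      · have : y % 2 = 0 := by omega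
        simp [Int.mul_emod, this]
    have oz : z % 2 = 1 := by
      have e : z ^ 2 = (x ^ 2 + y ^ 2) ^ 2 + 32 * (x * y) ^ 2 := by linear_combination -h
      have := cub_parity_sq z
      have := cub_parity_sq (x ^ 2 + y ^ 2)
      omega
    obtain ⟨m, hm⟩ : (2 : ℤ) ∣ z - (x ^ 2 + y ^ 2) := by omega
    obtain ⟨n, hn⟩ : (2 : ℤ) ∣ z + (x ^ 2 + y ^ 2) := by omega
    have hmn : m * n = 8 * (x * y) ^ 2 := by
      rw [hm, hn] at hprod; linarith
    have hgn : x ^ 2 + y ^ 2 = n - m := by omega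
    have cg2 : IsCoprime (x ^ 2 + y ^ 2) 8 := by
      have : IsCoprime (x ^ 2 + y ^ 2) 2 := ⟨1, -((x ^ 2 + y ^ 2) / 2), by omega⟩
      have := this.pow_right (n := 3)
      norm_num at this; exact this
    have cg3 : IsCoprime (x ^ 2 + y ^ 2) (m * n) := by rw [hmn]; exact cg2.mul_right cs
    have cmn : IsCoprime m n := by
      have : IsCoprime (n - m) m := by rw [← hgn]; exact cg3.of_mul_right_left
      have := this.add_mul_left_left 1
      simp at this; exact this.symm
    have mpos : 0 < m := by omega
    have npos : 0 < n := by omega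
    have odd8 : ∀ t : ℤ, t % 2 = 1 → IsCoprime (8 : ℤ) t := by
      intro t ht
      have : IsCoprime (2 : ℤ) t := ⟨-(t / 2), 1, by omega⟩
      have := this.pow_left (m := 3)
      norm_num at this; exact this
    rcases Int.emod_two_eq_zero_or_one n with n2 | n2
    · have m2 : m % 2 = 1 := by omega
      obtain ⟨n', rfl⟩ : (8 : ℤ) ∣ n := (odd8 m m2).dvd_of_dvd_mul_left ⟨_, hmn⟩
      obtain ⟨s, r, hs, hr, hrs⟩ := cub_sqpair (m := m) (n := n') (w := x * y) mpos (by omega)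
        (cmn.of_mul_right_right) (by linarith)
      have := cub_parity_sq r
      have := cub_parity_sq s
      omega
    · have m2 : m % 2 = 0 := by omega
      obtain ⟨m', rfl⟩ : (8 : ℤ) ∣ m := (odd8 n n2).dvd_of_dvd_mul_right ⟨_, hmn⟩
      obtain ⟨r, s, hr, hs, hrs⟩ := cub_sqpair (m := m') (n := n) (w := x * y) (by omega) npos
        (cmn.of_mul_left_right) (by linarith)
      have crs : IsCoprime r s := by
        have := cmn.of_mul_left_right
        rw [hs, hr] at this
        exact (IsCoprime.pow_iff (by norm_num) (by norm_num)).mp this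
      have hsum : x ^ 2 + y ^ 2 = s ^ 2 - 8 * r ^ 2 := by linarith
      have hpp : (s ^ 2 - 16 * r ^ 2) * (s ^ 2 - 4 * r ^ 2) = (x ^ 2 - y ^ 2) ^ 2 := by
        have : (x ^ 2 - y ^ 2) ^ 2 = (x ^ 2 + y ^ 2) ^ 2 - 4 * (x * y) ^ 2 := by ring
        rw [this, hsum, ← hrs]; ring
      have ps := cub_parity_sq s
      have os : s % 2 = 1 := by omega
      have hr0 : r ≠ 0 := by
        rintro rfl
        have : x * y ≠ 0 := mul_ne_zero hx hy
        simp at hrs; rcases hrs with h | h <;> contradiction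
      have cs2 : IsCoprime s (2 * r) := by
        refine IsCoprime.mul_right ?_ crs.symm
        exact ⟨1, -(s / 2), by omega⟩
      have hr2 : r % 2 = 0 := by
        rw [← hrs] at exy
        rcases Int.emod_two_eq_zero_or_one r with h' | h'
        · exact h'
        · simp [Int.mul_emod, h', os] at exy
      obtain ⟨e, A, B, he, hA, hB⟩ := cub_split hpp (by omega) (by
          intro d d1 d2
          apply cub_gcd3 cs2
          · have := dvd_sub (d2.mul_left 4) d1
            have e : 4 * (s ^ 2 - 4 * r ^ 2) - (s ^ 2 - 16 * r ^ 2) = 3 * s ^ 2 := by ring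
            rwa [e] at this
          · have := dvd_sub d2 d1
            have e : (s ^ 2 - 4 * r ^ 2) - (s ^ 2 - 16 * r ^ 2) = 3 * (2 * r) ^ 2 := by ring
            rwa [e] at this)
      have pA := cub_parity_sq A
      have e3 : e = 1 := by
        rcases he with rfl | rfl | rfl | rfl <;> omega
      subst e3
      exact cub_D _ s (2 * r) B A rfl (by omega) cs2 (by linarith [mul_pow 2 r 2])
        (by linarith [mul_pow 2 r 2])

lemma cub_quartic {x y z : ℤ} (hx : x ≠ 0) (hy : y ≠ 0)
    (h : x ^ 4 + 34 * x ^ 2 * y ^ 2 + y ^ 4 = z ^ 2) : x ^ 2 = y ^ 2 := by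
  have hg : 0 < Int.gcd x y := Int.gcd_pos_of_ne_zero_left _ hx
  obtain ⟨x', y', hc, h1, h2⟩ := Int.exists_gcd_one hg
  set g : ℤ := (Int.gcd x y : ℤ) with hgdef
  have hg0 : g ≠ 0 := by omega
  rw [← Int.isCoprime_iff_gcd_eq_one] at hc
  have hd : (g ^ 2) ^ 2 ∣ z ^ 2 :=
    ⟨x' ^ 4 + 34 * x' ^ 2 * y' ^ 2 + y' ^ 4, by rw [← h, h1, h2]; ring⟩
  rw [Int.pow_dvd_pow_iff (by norm_num)] at hd
  obtain ⟨z', rfl⟩ := hd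
  have hx' : x' ≠ 0 := by rintro rfl; simp at h1; exact hx h1
  have hy' : y' ≠ 0 := by rintro rfl; simp at h2; exact hy h2
  have := cub_quartic_coprime (z := z') hx' hy' hc (by
    apply mul_left_cancel₀ (pow_ne_zero 4 hg0)
    rw [h1, h2] at h; linear_combination h)
  rw [h1, h2, mul_pow, mul_pow, this]

lemma cub_no_quadratic (a u : ℤ) (ha : 0 < a) (hu : 0 < u) (hne : a ≠ u)
    (Q R : Polynomial ℤ) (hQ : Q.degree = 2) (h : cuboidPoly a u = Q * R) : False := by
  have hΔ : u ^ 2 - a ^ 2 ≠ 0 := by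
    intro h0
    have : (u - a) * (u + a) = 0 := by linarith
    rcases mul_eq_zero.mp this with h | h <;> omega
  set Δ := u ^ 2 - a ^ 2 with hΔd
  have hPm : (cuboidPoly a u).Monic := by
    unfold cuboidPoly; monicity!
  have hnat : Q.natDegree = 2 := natDegree_eq_of_degree_eq_some hQ
  have hlead : Q.coeff 2 * R.leadingCoeff = 1 := by
    have := hPm.leadingCoeff
    rw [h, leadingCoeff_mul] at this
    rwa [leadingCoeff, hnat] at this
  have hQe : Q = C (Q.coeff 2) * X ^ 2 + C (Q.coeff 1) * X + C (Q.coeff 0) :=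
    eq_quadratic_of_degree_le_two hQ.le
  have he : Q.coeff 2 * Q.coeff 2 = 1 := by
    rcases Int.eq_one_or_neg_one_of_mul_eq_one hlead with h | h <;> rw [h] <;> norm_num
  have hc0 : Q.coeff 0 * R.coeff 0 = a ^ 4 * u ^ 4 := by
    have := congrArg (fun p => p.eval 0) h
    simp [cuboidPoly] at this
    rw [coeff_zero_eq_eval_zero, coeff_zero_eq_eval_zero]; exact this.symm
  obtain ⟨τ, hτ⟩ : ∃ τ : ℂ, aeval τ Q = 0 := by
    have := IsAlgClosed.exists_aeval_eq_zero_of_injective ℂ (R := ℤ)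
      (by simpa using Int.cast_injective) Q (by rw [hQ]; decide)
    exact this
  have hP0 : aeval τ (cuboidPoly a u) = 0 := by rw [h, map_mul, hτ, zero_mul]
  set b := Q.coeff 2 * Q.coeff 1 with hb
  set c := Q.coeff 2 * Q.coeff 0 with hc
  have hcne : c ≠ 0 := by
    have : a ^ 4 * u ^ 4 ≠ 0 := by positivity
    have h0 : Q.coeff 0 ≠ 0 := by intro h0; rw [h0] at hc0; simp at hc0; omega
    have h2 : Q.coeff 2 ≠ 0 := by intro h0; rw [h0] at he; simp at he
    exact mul_ne_zero h2 h0
  have hτ2 : τ ^ 2 + b * τ + c = 0 := by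
    rw [hQe] at hτ
    simp at hτ
    have he' : (Q.coeff 2 : ℂ) * Q.coeff 2 = 1 := by exact_mod_cast he
    rw [hb, hc]; push_cast
    linear_combination (Q.coeff 2 : ℂ) * hτ - τ ^ 2 * he'
  clear_value b c
  have hPτ : (τ ^ 4 + 3 * Δ * τ ^ 2 - (a * u) ^ 2) ^ 2 = 8 * (Δ : ℂ) ^ 2 * τ ^ 4 := by
    have t6 : aeval τ (6 : ℤ[X]) = (6 : ℂ) := map_ofNat (aeval τ) 6
    have t2 : aeval τ (2 : ℤ[X]) = (2 : ℂ) := map_ofNat (aeval τ) 2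
    simp [cuboidPoly] at hP0
    rw [t6, t2] at hP0
    rw [hΔd]; push_cast
    linear_combination hP0
  have hcC : (c : ℂ) ≠ 0 := by exact_mod_cast hcne
  have hτ0 : τ ≠ 0 := by rintro rfl; simp at hτ2; exact hcne hτ2
  clear_value Δ
  -- not rational
  have hirr : ∀ q : ℚ, τ ≠ q := by
    rintro q rfl
    have hq0 : q ≠ 0 := by rintro rfl; simp at hτ0
    have h1 : (q ^ 4 + 3 * Δ * q ^ 2 - (a * u) ^ 2) ^ 2 = 8 * (Δ : ℚ) ^ 2 * q ^ 4 := by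
      exact_mod_cast hPτ
    have := cub_two_mul_sq (q ^ 4 + 3 * Δ * q ^ 2 - (a * u) ^ 2) (2 * Δ * q ^ 2) (by rw [h1]; ring)
    have hΔQ : (Δ : ℚ) ≠ 0 := by exact_mod_cast hΔ
    have h3 : (2 * Δ * q ^ 2 : ℚ) ≠ 0 := by positivity
    exact h3 this
  have hlin : ∀ E F : ℤ, (E : ℂ) * τ + F = 0 → E = 0 ∧ F = 0 := by
    intro E F hEF
    have hE : E = 0 := by
      by_contra hE
      have hEC : (E : ℂ) ≠ 0 := by exact_mod_cast hE
      apply hirr (-F / E)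
      push_cast
      field_simp
      linear_combination hEF
    refine ⟨hE, ?_⟩
    rw [hE] at hEF
    simpa using hEF
  set m : ℤ := (a * u) ^ 2 with hm
  have hau : a * u ≠ 0 := by positivity
  have hmC : ((a : ℂ) * u) ^ 2 = (m : ℂ) := by rw [hm]; push_cast; ring
  rw [hmC] at hPτ
  obtain ⟨Z, hZ⟩ : ∃ Z : ℤ, Z = -b * (c ^ 2 + m) := ⟨_, rfl⟩
  obtain ⟨Y, hY⟩ : ∃ Y : ℤ, Y = -c ^ 3 - m * b ^ 2 + m * c + 3 * Δ * c ^ 2 := ⟨_, rfl⟩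
  have hG : (c : ℂ) ^ 2 * (τ ^ 4 + 3 * Δ * τ ^ 2 - m) = (Z * τ + Y) * τ ^ 2 := by
    have e1 : (c : ℂ) = -(τ ^ 2 + b * τ) := by linear_combination hτ2
    rw [hZ, hY]; push_cast; rw [e1]; ring
  have hsq : ((Z : ℂ) * τ + Y) ^ 2 = 8 * Δ ^ 2 * c ^ 4 := by
    apply mul_right_cancel₀ (pow_ne_zero 4 hτ0)
    have : (((Z : ℂ) * τ + Y) * τ ^ 2) ^ 2 = c ^ 4 * (8 * (Δ : ℂ) ^ 2 * τ ^ 4) := by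
      rw [← hG, ← hPτ]; ring
    linear_combination this
  obtain ⟨f1, f2⟩ := hlin (2 * Y * Z - b * Z ^ 2) (Y ^ 2 - c * Z ^ 2 - 8 * Δ ^ 2 * c ^ 4) (by
    push_cast
    linear_combination hsq - (Z : ℂ) ^ 2 * hτ2)
  have hZ0 : Z ≠ 0 := by
    intro hZ0
    rw [hZ0] at f2
    have hq : (Y : ℚ) ^ 2 = 2 * (2 * Δ * c ^ 2) ^ 2 := by
      have : Y ^ 2 = 2 * (2 * Δ * c ^ 2) ^ 2 := by linear_combination f2
      exact_mod_cast this
    have := cub_two_mul_sq _ _ hq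
    have h3 : (2 * Δ * c ^ 2 : ℤ) ≠ 0 := by positivity
    exact h3 (by exact_mod_cast this)
  have g1 : 2 * Y = b * Z := by
    apply mul_right_cancel₀ hZ0; linear_combination f1
  have k1 : 6 * Δ * c ^ 2 = (b ^ 2 - 2 * c) * (m - c ^ 2) := by
    rw [hY, hZ] at g1; linear_combination g1
  have k2 : b ^ 2 * (b ^ 2 - 4 * c) * (c ^ 2 + m) ^ 2 = 32 * Δ ^ 2 * c ^ 4 := by
    have : (b * Z) ^ 2 - 4 * c * Z ^ 2 = 32 * Δ ^ 2 * c ^ 4 := by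
      rw [← g1]; linear_combination 4 * f2
    rw [hZ] at this
    linarith
  have hk0 : b ^ 2 - 2 * c ≠ 0 := by
    intro h0; rw [h0, zero_mul] at k1
    have h3 : (6 * Δ * c ^ 2 : ℤ) ≠ 0 := by positivity
    exact h3 k1
  have k3 : (b ^ 2 - 2 * c) ^ 2 * (c ^ 4 + 34 * c ^ 2 * m + m ^ 2) = (6 * c * (c ^ 2 + m)) ^ 2 := by
    linear_combination 9 * k2 + 8 * (6 * Δ * c ^ 2 + (b ^ 2 - 2 * c) * (m - c ^ 2)) * k1
  obtain ⟨z, hz⟩ : (b ^ 2 - 2 * c) ∣ 6 * c * (c ^ 2 + m) := by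
    rw [← Int.pow_dvd_pow_iff (n := 2) (by norm_num)]
    exact ⟨_, k3.symm⟩
  have k4 : c ^ 4 + 34 * c ^ 2 * (a * u) ^ 2 + (a * u) ^ 4 = z ^ 2 := by
    apply mul_left_cancel₀ (pow_ne_zero 2 hk0)
    rw [hz] at k3
    rw [hm] at k3
    linear_combination k3
  have := cub_quartic hcne hau k4
  rw [hm, this, sub_self, mul_zero] at k1
  have h3 : (6 * Δ * (a * u) ^ 2 : ℤ) ≠ 0 := by positivity
  exact h3 k1

theorem cuboidPoly_no_other_patterns (a u : ℤ) (ha : 0 < a) (hu : 0 < u)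
    (hco : IsCoprime a u) (hne : a ≠ u) :
    (¬ ∃ Q₁ Q₂ H : Polynomial ℤ, Q₁.degree = 2 ∧ Q₂.degree = 2 ∧ H.degree = 4 ∧
        cuboidPoly a u = Q₁ * Q₂ * H) ∧
    (¬ ∃ Q₁ Q₂ Q₃ Q₄ : Polynomial ℤ, Q₁.degree = 2 ∧ Q₂.degree = 2 ∧ Q₃.degree = 2 ∧
        Q₄.degree = 2 ∧ cuboidPoly a u = Q₁ * Q₂ * Q₃ * Q₄) ∧
    (¬ ∃ F₃ G₃ Q : Polynomial ℤ, F₃.degree = 3 ∧ G₃.degree = 3 ∧ Q.degree = 2 ∧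
        cuboidPoly a u = F₃ * G₃ * Q) := by
  refine ⟨?_, ?_, ?_⟩
  · rintro ⟨Q₁, Q₂, H, h1, -, -, h⟩
    exact cub_no_quadratic a u ha hu hne Q₁ (Q₂ * H) h1 (by rw [h]; ring)
  · rintro ⟨Q₁, Q₂, Q₃, Q₄, h1, -, -, -, h⟩
    exact cub_no_quadratic a u ha hu hne Q₁ (Q₂ * Q₃ * Q₄) h1 (by rw [h]; ring)
  · rintro ⟨F, G, Q, -, -, h1, h⟩
    exact cub_no_quadratic a u ha hu hne Q (F * G) h1 (by rw [h]; ring)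
end

section
/- The group of rational points of the elliptic curve E₀ : y² = x(x+1)(x+9) over ℚ is isomorphic to ℤ/2ℤ × ℤ/4ℤ; in particular E₀(ℚ) is finite (its Mordell–Weil rank is 0) and consists exactly of the point at infinity together with (0,0), (−1,0), (−9,0), (3,12), (3,−12), (−3,6), (−3,−6). -/
theorem four_num (m n p q : ℤ) (hm : m ≠ 0) (h : m * n = p * q) :
    ∃ r s t k : ℤ, m = r * s ∧ n = t * k ∧ p = r * t ∧ q = s * k := by
  obtain ⟨r, s, ⟨t, ht⟩, ⟨k, hk⟩, hrs⟩ := exists_dvd_and_dvd_of_dvd_mul (Dvd.intro n h)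
  refine ⟨r, s, t, k, hrs, ?_, ht, hk⟩
  apply mul_left_cancel₀ hm
  rw [h, ht, hk, hrs]; ring

theorem ratio_sq (r k A B : ℤ) (hk : k ≠ 0) (hc : IsCoprime r k) (h : r ^ 2 * A = k ^ 2 * B) :
    ∃ c, A = c * k ^ 2 ∧ B = c * r ^ 2 := by
  have h1 : k ^ 2 ∣ r ^ 2 * A := Dvd.intro _ h.symm
  have h2 : IsCoprime (k ^ 2) (r ^ 2) := (hc.symm).pow
  obtain ⟨c, hcc⟩ := h2.dvd_of_dvd_mul_left h1
  refine ⟨c, by rw [hcc]; ring, ?_⟩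
  apply mul_left_cancel₀ (pow_ne_zero 2 hk)
  rw [← h, hcc]; ring

theorem dvd_eight (c s t : ℤ) (hst : IsCoprime s t) (h1 : c ∣ 8 * s ^ 2) (h2 : c ∣ 8 * t ^ 2)
    (hc : 0 < c) : c = 1 ∨ c = 2 ∨ c = 4 ∨ c = 8 := by
  have h : IsCoprime (s ^ 2) (t ^ 2) := hst.pow
  obtain ⟨a, b, hab⟩ := h
  have h8 : c ∣ 8 := by
    have : (8 : ℤ) = a * (8 * s ^ 2) + b * (8 * t ^ 2) := by linear_combination -8 * hab
    rw [this]
    exact dvd_add (h1.mul_left a) (h2.mul_left b)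
  have := Int.le_of_dvd (by norm_num) h8
  interval_cases c <;> simp_all

theorem not_both (d a b : ℤ) (hd : d.natAbs ≠ 1) (h : IsCoprime a b) (ha : d ∣ a) (hb : d ∣ b) :
    False :=
  hd (Int.isUnit_iff_natAbs_eq.mp (h.isUnit_of_dvd' ha hb))

theorem odd_sq (x : ℤ) (h : x % 2 = 1) : ∃ j, x ^ 2 = 8 * j + 1 := by
  have := Int.sq_mod_four_eq_one_of_odd (Int.odd_iff.mpr h)
  have h8 : x ^ 2 % 8 = 1 := by
    have : x % 8 = 1 ∨ x % 8 = 3 ∨ x % 8 = 5 ∨ x % 8 = 7 := by omega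
    rcases this with h | h | h | h <;> simp [pow_two, Int.mul_emod, h]
  exact ⟨x ^ 2 / 8, by omega⟩

theorem even_sq (x : ℤ) (h : x % 2 = 0) : ∃ j, x ^ 2 = 4 * j := by
  obtain ⟨y, hy⟩ := Int.dvd_of_emod_eq_zero h
  exact ⟨y ^ 2, by rw [hy]; ring⟩

theorem odd_mul (a b : ℤ) (ha : a % 2 = 1) (hb : b % 2 = 1) : (a * b) % 2 = 1 := by
  simp [Int.mul_emod, ha, hb]

theorem cop2 (a b : ℤ) (h : IsCoprime a b) (ha : a % 2 = 0) (hb : b % 2 = 0) : False :=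
  not_both 2 a b (by decide) h (Int.dvd_of_emod_eq_zero ha) (Int.dvd_of_emod_eq_zero hb)

theorem sq_mod3 (a b : ℤ) (h : 3 ∣ a ^ 2 + b ^ 2) : 3 ∣ a ∧ 3 ∣ b := by
  have ha : a % 3 = 0 ∨ a % 3 = 1 ∨ a % 3 = 2 := by omega
  have hb : b % 3 = 0 ∨ b % 3 = 1 ∨ b % 3 = 2 := by omega
  have h' := Int.emod_eq_zero_of_dvd h
  rcases ha with ha | ha | ha <;> rcases hb with hb | hb | hb <;>
    simp [pow_two, Int.add_emod, Int.mul_emod, ha, hb] at h' <;>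
    exact ⟨Int.dvd_of_emod_eq_zero ha, Int.dvd_of_emod_eq_zero hb⟩

theorem core1 (m n p q : ℤ) (hmn : IsCoprime m n) (hpq : IsCoprime p q) (h : m * n = p * q)
    (he : 9 * p ^ 2 - q ^ 2 = m ^ 2 - n ^ 2) (h0 : m * n ≠ 0)
    (hpar : (m % 2 = 0 ∧ n % 2 = 1) ∨ (m % 2 = 1 ∧ n % 2 = 0)) :
    ∃ u e v w : ℤ, IsCoprime u e ∧ u * e ≠ 0 ∧ (u * e) ∣ (m * n) ∧ u ^ 2 + e ^ 2 = v ^ 2 ∧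
      u ^ 2 + 9 * e ^ 2 = w ^ 2 := by
  obtain ⟨r, s, t, k, rfl, rfl, rfl, rfl⟩ := four_num m n p q (left_ne_zero_of_mul h0) h
  have hrk : IsCoprime r k := hmn.of_mul_left_left.of_mul_right_right
  have hst : IsCoprime s t := hmn.of_mul_left_right.of_mul_right_left
  have hr : r ≠ 0 := by rintro rfl; simp at h0
  have hs : s ≠ 0 := by rintro rfl; simp at h0
  have ht : t ≠ 0 := by rintro rfl; simp at h0
  have hk : k ≠ 0 := by rintro rfl; simp at h0
  obtain ⟨c, hA, hB⟩ := ratio_sq r k (9 * t ^ 2 - s ^ 2) (s ^ 2 - t ^ 2) hk hrk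
    (by linear_combination he)
  have hsum : 8 * t ^ 2 = c * (k ^ 2 + r ^ 2) := by linear_combination hA + hB
  have hcpos : 0 < c := by
    have h1 : 0 < c * (k ^ 2 + r ^ 2) := by rw [← hsum]; positivity
    exact pos_of_mul_pos_left h1 (by positivity)
  have h8 := dvd_eight c s t hst ⟨k ^ 2 + 9 * r ^ 2, by linear_combination hA + 9 * hB⟩
    ⟨_, hsum⟩ hcpos
  have hodd : ∀ a b : ℤ, a = r ∧ b = k → c ≠ 8 → a % 2 = 1 ∧ b % 2 = 1 := by
    rintro a b ⟨rfl, rfl⟩ h8'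
    by_contra hcon
    rcases Int.emod_two_eq_zero_or_one a with ha | ha <;>
      rcases Int.emod_two_eq_zero_or_one b with hb | hb
    · exact cop2 _ _ hrk ha hb
    · obtain ⟨i, hi⟩ := even_sq a ha
      obtain ⟨j, hj⟩ := odd_sq b hb
      rw [hi, hj] at hsum
      rcases h8 with rfl | rfl | rfl | rfl <;> omega
    · obtain ⟨i, hi⟩ := odd_sq a ha
      obtain ⟨j, hj⟩ := even_sq b hb
      rw [hi, hj] at hsum
      rcases h8 with rfl | rfl | rfl | rfl <;> omega
    · exact hcon ⟨ha, hb⟩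
  by_cases hc8 : c = 8
  · subst hc8
    exact ⟨k, r, t, s, hrk.symm, mul_ne_zero hk hr, ⟨s * t, by ring⟩, by linarith, by linarith⟩
  · exfalso
    obtain ⟨hr1, hk1⟩ := hodd r k ⟨rfl, rfl⟩ hc8
    obtain ⟨i, hi⟩ := odd_sq r hr1
    obtain ⟨j, hj⟩ := odd_sq k hk1
    have hs1 : s % 2 = 0 ∨ t % 2 = 0 := by
      by_contra hcon
      have h1 := odd_mul r s hr1 (by omega)
      have h2 := odd_mul t k (by omega) hk1
      omega
    rw [hi, hj] at hsum
    rw [hj] at hA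
    rw [hi] at hB
    rcases Int.emod_two_eq_zero_or_one s with hs' | hs' <;>
      rcases Int.emod_two_eq_zero_or_one t with ht' | ht'
    · exact cop2 _ _ hst hs' ht'
    · obtain ⟨a, ha⟩ := even_sq s hs'
      obtain ⟨b, hb⟩ := odd_sq t ht'
      rw [ha, hb] at hA hB
      rw [hb] at hsum
      rcases h8 with rfl | rfl | rfl | rfl <;> omega
    · obtain ⟨a, ha⟩ := odd_sq s hs'
      obtain ⟨b, hb⟩ := even_sq t ht'
      rw [ha, hb] at hA hB
      rw [hb] at hsum
      rcases h8 with rfl | rfl | rfl | rfl <;> omega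
    · omega

theorem core2 (m n p q : ℤ) (hmn : IsCoprime m n) (h : m * n = p * q)
    (he : 3 * (m ^ 2 - n ^ 2) = p ^ 2 - q ^ 2) (h0 : m * n ≠ 0)
    (hpar : (m % 2 = 0 ∧ n % 2 = 1) ∨ (m % 2 = 1 ∧ n % 2 = 0)) : False := by
  obtain ⟨r, s, t, k, rfl, rfl, rfl, rfl⟩ := four_num m n p q (left_ne_zero_of_mul h0) h
  have hrk : IsCoprime r k := hmn.of_mul_left_left.of_mul_right_right
  have hst : IsCoprime s t := hmn.of_mul_left_right.of_mul_right_left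
  have hr : r ≠ 0 := by rintro rfl; simp at h0
  have hs : s ≠ 0 := by rintro rfl; simp at h0
  have ht : t ≠ 0 := by rintro rfl; simp at h0
  have hk : k ≠ 0 := by rintro rfl; simp at h0
  obtain ⟨c, hA, hB⟩ := ratio_sq r k (3 * s ^ 2 - t ^ 2) (3 * t ^ 2 - s ^ 2) hk hrk
    (by linear_combination he)
  have hsum : 2 * (s ^ 2 + t ^ 2) = c * (k ^ 2 + r ^ 2) := by linear_combination hA + hB
  have hcpos : 0 < c := by
    have h1 : 0 < c * (k ^ 2 + r ^ 2) := by rw [← hsum]; positivity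
    exact pos_of_mul_pos_left h1 (by positivity)
  have h8 := dvd_eight c s t hst ⟨3 * k ^ 2 + r ^ 2, by linear_combination 3 * hA + hB⟩
    ⟨k ^ 2 + 3 * r ^ 2, by linear_combination hA + 3 * hB⟩ hcpos
  have h3 : ∀ d : ℤ, c = d ^ 2 → False := by
    rintro d rfl
    have h1 := sq_mod3 t (d * k) ⟨s ^ 2, by linear_combination -hA⟩
    have h2 := sq_mod3 s (d * r) ⟨t ^ 2, by linear_combination -hB⟩
    exact not_both 3 s t (by decide) hst h2.1 h1.1
  have hc28 : c = 2 ∨ c = 8 := by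
    rcases h8 with h | h | h | h
    · exact (h3 1 (by simpa using h)).elim
    · exact Or.inl h
    · exact (h3 2 (by simpa using h)).elim
    · exact Or.inr h
  rcases Int.emod_two_eq_zero_or_one s with hs' | hs' <;>
    rcases Int.emod_two_eq_zero_or_one t with ht' | ht'
  · exact cop2 _ _ hst hs' ht'
  · obtain ⟨a, ha⟩ := even_sq s hs'
    obtain ⟨b, hb⟩ := odd_sq t ht'
    rw [ha, hb] at hA
    rcases hc28 with rfl | rfl <;> omega
  · obtain ⟨a, ha⟩ := odd_sq s hs'
    obtain ⟨b, hb⟩ := even_sq t ht'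
    rw [ha, hb] at hA
    rcases hc28 with rfl | rfl <;> omega
  · obtain ⟨a, ha⟩ := odd_sq s hs'
    obtain ⟨b, hb⟩ := odd_sq t ht'
    rw [ha, hb] at hA hB
    have hr1 : r % 2 = 1 := by
      by_contra hcon
      obtain ⟨i, hi⟩ := even_sq r (by omega)
      rw [hi] at hB
      rcases hc28 with rfl | rfl <;> omega
    have hk1 : k % 2 = 1 := by
      by_contra hcon
      obtain ⟨i, hi⟩ := even_sq k (by omega)
      rw [hi] at hA
      rcases hc28 with rfl | rfl <;> omega
    have h1 := odd_mul r s hr1 hs'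
    have h2 := odd_mul t k ht' hk1
    omega

theorem concordant : ∀ (N : ℕ) (u e v w : ℤ), (u * e).natAbs = N → IsCoprime u e → u * e ≠ 0 →
    u ^ 2 + e ^ 2 = v ^ 2 → u ^ 2 + 9 * e ^ 2 = w ^ 2 → False := by
  intro N
  induction N using Nat.strong_induction_on with
  | _ N ih =>
  intro u e v w hN hc h0 hv hw
  have hu0 := left_ne_zero_of_mul h0
  have he0 := right_ne_zero_of_mul h0
  by_cases h3 : (3 : ℤ) ∣ u
  · obtain ⟨u', rfl⟩ := h3
    have hw3 : (3 : ℤ) ∣ w := Int.prime_three.dvd_of_dvd_pow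
      (n := 2) ⟨3 * u' ^ 2 + 3 * e ^ 2, by linear_combination -hw⟩
    obtain ⟨w', rfl⟩ := hw3
    have h0' : e * u' ≠ 0 := by
      intro h
      exact h0 (by linear_combination 3 * h)
    refine ih _ ?_ e u' w' v rfl hc.symm.of_mul_right_right h0' (by linarith) (by linarith)
    rw [← hN, show 3 * u' * e = 3 * (e * u') by ring, Int.natAbs_mul 3]
    have := Int.natAbs_pos.mpr h0'
    have h33 : (3 : ℤ).natAbs = 3 := rfl
    rw [h33]
    omega
  · have hc3 : IsCoprime u (3 * e) :=
      IsCoprime.mul_right ((Int.prime_three.coprime_iff_not_dvd.mpr h3).symm) hc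
    obtain ⟨m, n, h1, -, hmn, hpar⟩ := PythagoreanTriple.coprime_classification.mp
      ⟨show PythagoreanTriple u e v by unfold PythagoreanTriple; linarith,
        Int.isCoprime_iff_gcd_eq_one.mp hc⟩
    obtain ⟨p, q, h2, -, hpq, hpar2⟩ := PythagoreanTriple.coprime_classification.mp
      ⟨show PythagoreanTriple u (3 * e) w by unfold PythagoreanTriple; linarith,
        Int.isCoprime_iff_gcd_eq_one.mp hc3⟩
    rw [← Int.isCoprime_iff_gcd_eq_one] at hmn hpq
    have hodd : ∀ a b : ℤ, (a % 2 = 0 ∧ b % 2 = 1) ∨ (a % 2 = 1 ∧ b % 2 = 0) →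
        (a ^ 2 - b ^ 2) % 2 = 1 := by
      rintro a b (⟨ha, hb⟩ | ⟨ha, hb⟩)
      · obtain ⟨i, hi⟩ := even_sq a ha
        obtain ⟨j, hj⟩ := odd_sq b hb
        omega
      · obtain ⟨i, hi⟩ := odd_sq a ha
        obtain ⟨j, hj⟩ := even_sq b hb
        omega
    have fin : ∀ m' n' : ℤ, m' * n' = m * n → e = 2 * m * n → (∃ u e v w : ℤ, IsCoprime u e ∧
        u * e ≠ 0 ∧ (u * e) ∣ (m' * n') ∧ u ^ 2 + e ^ 2 = v ^ 2 ∧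
      u ^ 2 + 9 * e ^ 2 = w ^ 2) → False := by
      rintro m' n' hmn' he ⟨U, E, V, W, hUE, hUE0, hd, hV, hW⟩
      refine ih _ ?_ U E V W rfl hUE hUE0 hV hW
      rw [hmn'] at hd
      have hne : m * n ≠ 0 := by
        intro h
        exact he0 (by linear_combination he + 2 * h)
      have hle := Nat.le_of_dvd (Int.natAbs_pos.mpr hne) (Int.natAbs_dvd_natAbs.mpr hd)
      have hpos := Int.natAbs_pos.mpr hne
      rw [← hN, he, show u * (2 * m * n) = u * 2 * (m * n) by ring, Int.natAbs_mul (u * 2),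
        Int.natAbs_mul u]
      have hu := Int.natAbs_pos.mpr hu0
      have h22 : (2 : ℤ).natAbs = 2 := rfl
      rw [h22]
      nlinarith
    have o1 := hodd m n hpar
    have o2 := hodd p q hpar2
    rcases h1 with ⟨hu, he⟩ | ⟨hu, he⟩ <;> rcases h2 with ⟨hu2, he2⟩ | ⟨hu2, he2⟩
    · have hprod : p * q = 3 * (m * n) := by linarith
      have hne : m * n ≠ 0 := by
        intro h
        exact he0 (by linear_combination he + 2 * h)
      rcases Int.prime_three.dvd_or_dvd (Dvd.intro _ hprod.symm) with ⟨x, rfl⟩ | ⟨x, rfl⟩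
      · exact fin m n rfl he (core1 m n x q hmn hpq.of_mul_left_right (by linarith)
          (by linarith) hne hpar)
      · exact fin n m (mul_comm _ _) he (core1 n m x p hmn.symm hpq.of_mul_right_right.symm
          (by linarith) (by linarith) (by rwa [mul_comm]) (by tauto))
    · rw [← hu, hu2, mul_assoc] at o1; omega
    · rw [← hu2, hu, mul_assoc] at o2; omega
    · refine core2 m n p q hmn (by linarith) (by linarith) ?_ hpar
      intro h
      exact hu0 (by linear_combination hu + 2 * h)

theorem concordant_rat (x a b : ℚ) (ha : x ^ 2 + 1 = a ^ 2) (hb : x ^ 2 + 9 = b ^ 2) : x = 0 := by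
  by_contra hx
  have hd : (x.den : ℚ) ≠ 0 := by exact_mod_cast x.den_nz
  have hxe : (x.num : ℚ) = x * x.den := (Rat.mul_den_eq_num x).symm
  have h1 : IsSquare (x.num ^ 2 + (x.den : ℤ) ^ 2) := by
    rw [← Rat.isSquare_intCast_iff]
    refine ⟨a * x.den, ?_⟩
    push_cast
    rw [hxe]; linear_combination (x.den : ℚ) ^ 2 * ha
  have h2 : IsSquare (x.num ^ 2 + 9 * (x.den : ℤ) ^ 2) := by
    rw [← Rat.isSquare_intCast_iff]
    refine ⟨b * x.den, ?_⟩
    push_cast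
    rw [hxe]; linear_combination (x.den : ℚ) ^ 2 * hb
  obtain ⟨v, hv⟩ := h1
  obtain ⟨w, hw⟩ := h2
  refine concordant _ x.num x.den v w rfl ?_ ?_ (by rw [hv]; ring) (by rw [hw]; ring)
  · rw [Int.isCoprime_iff_gcd_eq_one]; exact x.reduced
  · exact mul_ne_zero (Rat.num_ne_zero.mpr hx) (by exact_mod_cast x.den_nz)

theorem affine_points (x y : ℚ) : y ^ 2 = x * (x + 1) * (x + 9) ↔
      (x, y) ∈ ({(0, 0), (-1, 0), (-9, 0), (3, 12), (3, -12), (-3, 6), (-3, -6)} :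
        Set (ℚ × ℚ)) := by
  simp only [Set.mem_insert_iff, Set.mem_singleton_iff, Prod.mk.injEq]
  constructor
  · intro h
    by_cases hy : y = 0
    · subst hy
      have : x * (x + 1) * (x + 9) = 0 := by rw [← h]; ring
      rcases mul_eq_zero.mp this with h | h
      · rcases mul_eq_zero.mp h with h | h
        · simp [h]
        · have : x = -1 := by linarith
          simp [this]
      · have : x = -9 := by linarith
        simp [this]
    · have := concordant_rat ((x ^ 2 - 9) / (2 * y)) ((x ^ 2 + 2 * x + 9) / (2 * y))
        ((x ^ 2 + 18 * x + 9) / (2 * y))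
        (by field_simp; linear_combination 4 * h) (by field_simp; linear_combination 36 * h)
      have h9 : (x - 3) * (x + 3) = 0 := by
        have h2 : (2 * y) ≠ 0 := by simpa using hy
        rw [div_eq_zero_iff] at this
        rcases this with h' | h'
        · linarith
        · exact absurd h' h2
      rcases mul_eq_zero.mp h9 with hx | hx
      · have : x = 3 := by linarith
        subst this
        have : (y - 12) * (y + 12) = 0 := by linarith
        rcases mul_eq_zero.mp this with h | h
        · have : y = 12 := by linarith
          simp [this]
        · have : y = -12 := by linarith
          simp [this]
      · have : x = -3 := by linarith
        subst this
        have : (y - 6) * (y + 6) = 0 := by linarith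
        rcases mul_eq_zero.mp this with h | h
        · have : y = 6 := by linarith
          simp [this]
        · have : y = -6 := by linarith
          simp [this]
  · rintro (⟨rfl, rfl⟩ | ⟨rfl, rfl⟩ | ⟨rfl, rfl⟩ | ⟨rfl, rfl⟩ | ⟨rfl, rfl⟩ | ⟨rfl, rfl⟩ |
      ⟨rfl, rfl⟩) <;> norm_num

/-- The elliptic curve `E₀ : y² = x(x+1)(x+9)`, i.e. `y² = x³ + 10x² + 9x`,
as an affine Weierstrass curve over `ℚ`. -/
noncomputable def E0 : WeierstrassCurve.Affine ℚ :=
  { a₁ := 0, a₂ := 10, a₃ := 0, a₄ := 9, a₆ := 0 }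

open WeierstrassCurve.Affine in
theorem E0_ns (x y : ℚ) : E0.Nonsingular x y ↔ y ^ 2 = x * (x + 1) * (x + 9) := by
  have : E0.Equation x y ↔ y ^ 2 = x * (x + 1) * (x + 9) := by
    rw [equation_iff]
    simp only [E0]
    constructor <;> intro h <;> linarith
  rw [← this]
  refine (equation_iff_nonsingular_of_Δ_ne_zero ?_).symm
  norm_num [E0, WeierstrassCurve.Δ, WeierstrassCurve.b₂, WeierstrassCurve.b₄,
    WeierstrassCurve.b₆, WeierstrassCurve.b₈]

theorem E0_add_ne (x₁ y₁ x₂ y₂ x₃ y₃ : ℚ) (h₁ : E0.Nonsingular x₁ y₁) (h₂ : E0.Nonsingular x₂ y₂)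
    (h₃ : E0.Nonsingular x₃ y₃) (hx : x₁ ≠ x₂)
    (e1 : x₃ = ((y₁ - y₂) / (x₁ - x₂)) ^ 2 - 10 - x₁ - x₂)
    (e2 : y₃ = -((y₁ - y₂) / (x₁ - x₂) * (x₃ - x₁) + y₁)) :
    WeierstrassCurve.Affine.Point.some x₁ y₁ h₁ + .some x₂ y₂ h₂ = .some x₃ y₃ h₃ := by
  rw [WeierstrassCurve.Affine.Point.add_of_X_ne hx]
  have hX : E0.addX x₁ x₂ (E0.slope x₁ x₂ y₁ y₂) = x₃ := by
    rw [WeierstrassCurve.Affine.slope_of_X_ne hx, e1]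
    simp only [E0, WeierstrassCurve.Affine.addX]; ring
  rw [WeierstrassCurve.Affine.Point.some.injEq]
  refine ⟨hX, ?_⟩
  rw [WeierstrassCurve.Affine.addY, WeierstrassCurve.Affine.negAddY, hX,
    WeierstrassCurve.Affine.slope_of_X_ne hx, e2]
  simp only [E0, WeierstrassCurve.Affine.negY]; ring

noncomputable def E0T : E0.Point := .some (-1) 0 ((E0_ns _ _).mpr (by norm_num))
noncomputable def E0P : E0.Point := .some 3 12 ((E0_ns _ _).mpr (by norm_num))
noncomputable def E0Q : E0.Point := .some 0 0 ((E0_ns _ _).mpr (by norm_num))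

theorem E0_TT : E0T + E0T = 0 :=
  WeierstrassCurve.Affine.Point.add_self_of_Y_eq (by simp [WeierstrassCurve.Affine.negY, E0])

theorem E0_QQ : E0Q + E0Q = 0 :=
  WeierstrassCurve.Affine.Point.add_self_of_Y_eq (by simp [WeierstrassCurve.Affine.negY, E0])

theorem E0_QP : E0Q + E0P = -E0P := by
  rw [E0P, WeierstrassCurve.Affine.Point.neg_some]
  apply E0_add_ne <;> norm_num [WeierstrassCurve.Affine.negY, E0]

theorem E0_PP : E0P + E0P = E0Q := by
  have := E0_QP
  have h2 : E0P + E0P = -E0Q := by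
    rw [eq_neg_iff_add_eq_zero, add_assoc, add_comm E0P E0Q, this, add_neg_cancel]
  rw [h2, neg_eq_iff_add_eq_zero, E0_QQ]

theorem E0_TP : E0T + E0P = .some (-3) 6 ((E0_ns _ _).mpr (by norm_num)) := by
  apply E0_add_ne <;> norm_num
theorem E0_TQ : E0T + E0Q = .some (-9) 0 ((E0_ns _ _).mpr (by norm_num)) := by
  apply E0_add_ne <;> norm_num
theorem E0_negP : -E0P = .some 3 (-12) ((E0_ns _ _).mpr (by norm_num)) := by
  rw [E0P, WeierstrassCurve.Affine.Point.neg_some, WeierstrassCurve.Affine.Point.some.injEq]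
  norm_num [WeierstrassCurve.Affine.negY, E0]
theorem E0_TnP : E0T + -E0P = .some (-3) (-6) ((E0_ns _ _).mpr (by norm_num)) := by
  rw [E0_negP]
  apply E0_add_ne <;> norm_num

noncomputable def E0hom : ZMod 2 × ZMod 4 →+ E0.Point :=
  (ZMod.lift 2 ⟨zmultiplesHom _ E0T, by simp [two_zsmul, E0_TT]⟩).coprod
  (ZMod.lift 4 ⟨zmultiplesHom _ E0P, by
    have : ((4 : ℕ) : ℤ) = 2 + 2 := rfl
    simp only [this, zmultiplesHom_apply, add_zsmul, two_zsmul, E0_PP, E0_QQ]⟩)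

theorem E0hom_apply (a b : ℤ) : E0hom ((a : ZMod 2), (b : ZMod 4)) = a • E0T + b • E0P := by
  rw [E0hom, AddMonoidHom.coprod_apply, ZMod.lift_coe, ZMod.lift_coe]
  rfl

theorem E0hom_vals : E0hom (0, 0) = 0 ∧ E0hom (0, 1) = E0P ∧ E0hom (0, 2) = E0Q ∧
    E0hom (0, 3) = -E0P ∧ E0hom (1, 0) = E0T ∧ E0hom (1, 1) = E0T + E0P ∧
    E0hom (1, 2) = E0T + E0Q ∧ E0hom (1, 3) = E0T + -E0P := by
  have h3 : (3 : ℤ) • E0P = -E0P := by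
    rw [show (3 : ℤ) = 2 + 1 from rfl, add_zsmul, two_zsmul, one_zsmul, E0_PP, E0_QP]
  refine ⟨map_zero _, ?_, ?_, ?_, ?_, ?_, ?_, ?_⟩
  · simpa using E0hom_apply 0 1
  · simpa [two_zsmul, E0_PP] using E0hom_apply 0 2
  · simpa [h3] using E0hom_apply 0 3
  · simpa using E0hom_apply 1 0
  · simpa using E0hom_apply 1 1
  · simpa [two_zsmul, E0_PP] using E0hom_apply 1 2
  · simpa [h3] using E0hom_apply 1 3

theorem E0hom_bij : Function.Bijective E0hom := by
  obtain ⟨v0, v1, v2, v3, v4, v5, v6, v7⟩ := E0hom_vals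
  rw [E0_TP] at v5
  rw [E0_TQ] at v6
  rw [E0_TnP] at v7
  rw [E0_negP] at v3
  constructor
  · rw [injective_iff_map_eq_zero]
    have key : ∀ a : ZMod 2 × ZMod 4, a = (0, 0) ∨ a = (0, 1) ∨ a = (0, 2) ∨ a = (0, 3) ∨
      a = (1, 0) ∨ a = (1, 1) ∨ a = (1, 2) ∨ a = (1, 3) := by decide
    intro a ha
    rcases key a with rfl | rfl | rfl | rfl | rfl | rfl | rfl | rfl
    · rfl
    · rw [v1] at ha; exact absurd ha (WeierstrassCurve.Affine.Point.some_ne_zero _)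
    · rw [v2] at ha; exact absurd ha (WeierstrassCurve.Affine.Point.some_ne_zero _)
    · rw [v3] at ha; exact absurd ha (WeierstrassCurve.Affine.Point.some_ne_zero _)
    · rw [v4] at ha; exact absurd ha (WeierstrassCurve.Affine.Point.some_ne_zero _)
    · rw [v5] at ha; exact absurd ha (WeierstrassCurve.Affine.Point.some_ne_zero _)
    · rw [v6] at ha; exact absurd ha (WeierstrassCurve.Affine.Point.some_ne_zero _)
    · rw [v7] at ha; exact absurd ha (WeierstrassCurve.Affine.Point.some_ne_zero _)
  · rintro (_ | ⟨x, y, h⟩)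
    · exact ⟨_, v0⟩
    · have h' := (affine_points x y).mp ((E0_ns x y).mp h)
      simp only [Set.mem_insert_iff, Set.mem_singleton_iff, Prod.mk.injEq] at h'
      rcases h' with (⟨rfl, rfl⟩ | ⟨rfl, rfl⟩ | ⟨rfl, rfl⟩ | ⟨rfl, rfl⟩ | ⟨rfl, rfl⟩ |
        ⟨rfl, rfl⟩ | ⟨rfl, rfl⟩)
      · exact ⟨_, v2⟩
      · exact ⟨_, v4⟩
      · exact ⟨_, v6⟩
      · exact ⟨_, v1⟩
      · exact ⟨_, v3⟩
      · exact ⟨_, v5⟩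
      · exact ⟨_, v7⟩

theorem E0_rational_points :
    Nonempty (E0.Point ≃+ ZMod 2 × ZMod 4) ∧
    (∀ x y : ℚ, y ^ 2 = x * (x + 1) * (x + 9) ↔
      (x, y) ∈ ({(0, 0), (-1, 0), (-9, 0), (3, 12), (3, -12), (-3, 6), (-3, -6)} :
        Set (ℚ × ℚ))) := by
  exact ⟨⟨(AddEquiv.ofBijective E0hom E0hom_bij).symm⟩, affine_points⟩
end

section
/- If x, y ∈ ℚ satisfy y² = x(x+1)(x+9) and x is the square of a rational number, then x = 0 (and hence y = 0). In other words, the only rational point on E₀ whose x-coordinate is a rational square is (0,0). -/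
theorem aux_odd_sq (a : ℤ) (h : a % 2 = 1) : ∃ k, a ^ 2 = 8 * k + 1 := by
  have := Int.sq_mod_four_eq_one_of_odd (Int.odd_iff.2 h)
  have h8 : a ^ 2 % 8 = 1 := by
    have : a % 8 = 1 ∨ a % 8 = 3 ∨ a % 8 = 5 ∨ a % 8 = 7 := by omega
    rcases this with h | h | h | h <;> simp [pow_two, Int.mul_emod, h]
  exact ⟨a ^ 2 / 8, by omega⟩

theorem aux_even_sq (a : ℤ) (h : a % 2 = 0) : ∃ k, a ^ 2 = 4 * k := by
  obtain ⟨k, rfl⟩ := Int.dvd_of_emod_eq_zero h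
  exact ⟨k ^ 2, by ring⟩

theorem aux_even_case (α β γ δ : ℤ)
    (h1 : (α * β) % 2 = 0 ∧ (γ * δ) % 2 = 1 ∨ (α * β) % 2 = 1 ∧ (γ * δ) % 2 = 0)
    (h2 : (α * γ) % 2 = 0 ∧ (β * δ) % 2 = 1 ∨ (α * γ) % 2 = 1 ∧ (β * δ) % 2 = 0)
    (h : β ^ 2 * (3 * α ^ 2 + δ ^ 2) = γ ^ 2 * (α ^ 2 + 3 * δ ^ 2)) : False := by
  rcases Int.emod_two_eq_zero_or_one α with ha | ha <;>
  rcases Int.emod_two_eq_zero_or_one β with hb | hb <;>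
  rcases Int.emod_two_eq_zero_or_one γ with hc | hc <;>
  rcases Int.emod_two_eq_zero_or_one δ with hd | hd <;>
  simp [Int.mul_emod, ha, hb, hc, hd] at h1 h2
  · obtain ⟨i, hi⟩ := aux_even_sq _ ha
    obtain ⟨j, hj⟩ := aux_odd_sq _ hb
    obtain ⟨k, hk⟩ := aux_odd_sq _ hc
    obtain ⟨l, hl⟩ := aux_odd_sq _ hd
    rw [hi, hj, hk, hl] at h
    ring_nf at h
    omega
  · obtain ⟨i, hi⟩ := aux_odd_sq _ ha
    obtain ⟨j, hj⟩ := aux_even_sq _ hb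
    obtain ⟨k, hk⟩ := aux_odd_sq _ hc
    obtain ⟨l, hl⟩ := aux_odd_sq _ hd
    rw [hi, hj, hk, hl] at h
    ring_nf at h
    omega
  · obtain ⟨i, hi⟩ := aux_odd_sq _ ha
    obtain ⟨j, hj⟩ := aux_odd_sq _ hb
    obtain ⟨k, hk⟩ := aux_even_sq _ hc
    obtain ⟨l, hl⟩ := aux_odd_sq _ hd
    rw [hi, hj, hk, hl] at h
    ring_nf at h
    omega
  · obtain ⟨i, hi⟩ := aux_odd_sq _ ha
    obtain ⟨j, hj⟩ := aux_odd_sq _ hb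
    obtain ⟨k, hk⟩ := aux_odd_sq _ hc
    obtain ⟨l, hl⟩ := aux_even_sq _ hd
    rw [hi, hj, hk, hl] at h
    ring_nf at h
    omega

theorem aux_four (m n p q : ℤ) (h : m * n = p * q) (hp : p ≠ 0) :
    ∃ α β γ δ : ℤ, m = α * β ∧ n = γ * δ ∧ p = α * γ ∧ q = β * δ := by
  obtain ⟨α, γ, ⟨β, rfl⟩, ⟨δ, rfl⟩, rfl⟩ := exists_dvd_and_dvd_of_dvd_mul (Dvd.intro _ h.symm)
  refine ⟨α, β, γ, δ, rfl, rfl, rfl, ?_⟩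
  apply mul_left_cancel₀ hp
  rw [← h]; ring

theorem aux_cop (a b : ℤ) (hc : IsCoprime a b) : IsCoprime (a ^ 2 + b ^ 2) b := by
  have h : IsCoprime (a ^ 2) b := hc.pow_left
  have := h.add_mul_right_left b
  rwa [← pow_two] at this

theorem aux_squares (a b w : ℤ) (hc : IsCoprime a b) (ha : a ≠ 0)
    (h : (a ^ 2 + b ^ 2) * (a ^ 2 + 9 * b ^ 2) = w ^ 2) :
    ∃ s t : ℤ, a ^ 2 + b ^ 2 = s ^ 2 ∧ a ^ 2 + 9 * b ^ 2 = t ^ 2 := by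
  have hpos : 0 < a ^ 2 := by positivity
  have hb2 : 0 ≤ b ^ 2 := by positivity
  have key : ∀ A B v : ℤ, 0 < A → 0 < B → IsCoprime A B → A * B = v ^ 2 →
      ∃ s t : ℤ, A = s ^ 2 ∧ B = t ^ 2 := by
    intro A B v hA hB hAB hv
    obtain ⟨s, hs⟩ := Int.sq_of_isCoprime hAB hv
    obtain ⟨t, ht⟩ := Int.sq_of_isCoprime hAB.symm (by rw [mul_comm]; exact hv)
    refine ⟨s, t, ?_, ?_⟩
    · rcases hs with h | h
      · exact h
      · nlinarith [sq_nonneg s]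
    · rcases ht with h | h
      · exact h
      · nlinarith [sq_nonneg t]
  have hcop := aux_cop a b hc
  rcases Int.emod_two_eq_zero_or_one (a ^ 2 + b ^ 2) with he | ho
  · exfalso
    have hodd : a % 2 = 1 ∧ b % 2 = 1 := by
      rcases Int.emod_two_eq_zero_or_one a with h1 | h1 <;>
      rcases Int.emod_two_eq_zero_or_one b with h2 | h2
      · exfalso
        have := hc.isUnit_of_dvd' (Int.dvd_of_emod_eq_zero h1) (Int.dvd_of_emod_eq_zero h2)
        rw [Int.isUnit_iff] at this
        omega
      · simp [pow_two, Int.add_emod, Int.mul_emod, h1, h2] at he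
      · simp [pow_two, Int.add_emod, Int.mul_emod, h1, h2] at he
      · exact ⟨h1, h2⟩
    obtain ⟨i, hi⟩ := aux_odd_sq _ hodd.1
    obtain ⟨j, hj⟩ := aux_odd_sq _ hodd.2
    have hw : w % 2 = 0 := by
      rcases Int.emod_two_eq_zero_or_one w with h1 | h1
      · exact h1
      · obtain ⟨k, hk⟩ := aux_odd_sq _ h1
        rw [hi, hj, hk] at h
        ring_nf at h
        omega
    obtain ⟨v, rfl⟩ := Int.dvd_of_emod_eq_zero hw
    obtain ⟨A, hA⟩ := Int.dvd_of_emod_eq_zero he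
    have hB : a ^ 2 + 9 * b ^ 2 = 2 * (A + 2 ^ 2 * b ^ 2) := by linarith
    have hAodd : IsCoprime A 2 := by
      have : A = 2 * (2 * (i + j)) + 1 := by omega
      exact ⟨1, -(2 * (i + j)), by rw [this]; ring⟩
    have hAb : IsCoprime A b := by
      rw [hA] at hcop
      exact hcop.of_mul_left_right
    have hcAB : IsCoprime A (A + 2 ^ 2 * b ^ 2) := by
      have h1 : IsCoprime A (2 ^ 2 * b ^ 2) := (hAodd.pow_right).mul_right hAb.pow_right
      have := h1.add_mul_left_right 1
      rwa [mul_one, add_comm] at this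
    obtain ⟨s, t, hs, ht⟩ := key A _ v (by omega) (by nlinarith) hcAB
      (by rw [hA, hB] at h; nlinarith)
    have hs1 : s % 2 = 1 := by
      rcases Int.emod_two_eq_zero_or_one s with h1 | h1
      · obtain ⟨k, hk⟩ := aux_even_sq _ h1
        omega
      · exact h1
    have ht1 : t % 2 = 1 := by
      rcases Int.emod_two_eq_zero_or_one t with h1 | h1
      · obtain ⟨k, hk⟩ := aux_even_sq _ h1
        omega
      · exact h1
    obtain ⟨k, hk⟩ := aux_odd_sq _ hs1
    obtain ⟨l, hl⟩ := aux_odd_sq _ ht1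
    omega
  · apply key _ _ w (by positivity) (by positivity) _ h
    have h2 : IsCoprime (a ^ 2 + b ^ 2) 2 :=
      ⟨1, -((a ^ 2 + b ^ 2) / 2), by omega⟩
    have h1 : IsCoprime (a ^ 2 + b ^ 2) (2 ^ 3 * b ^ 2) := (h2.pow_right).mul_right hcop.pow_right
    have := h1.add_mul_left_right 1
    have e : a ^ 2 + 9 * b ^ 2 = 2 ^ 3 * b ^ 2 + (a ^ 2 + b ^ 2) * 1 := by ring
    rw [e]
    exact this

theorem aux_main (N : ℕ) : ∀ a b w : ℤ, (a * b).natAbs = N → IsCoprime a b → a ≠ 0 → b ≠ 0 →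
    (a ^ 2 + b ^ 2) * (a ^ 2 + 9 * b ^ 2) = w ^ 2 → False := by
  induction N using Nat.strong_induction_on with
  | _ N ih =>
  intro a b w hN hc ha hb h
  -- descent step
  have step : ∀ α β γ δ : ℤ, IsCoprime α δ → b = 2 * (α * β) * (γ * δ) →
      β ^ 2 * (α ^ 2 + 9 * δ ^ 2) = γ ^ 2 * (α ^ 2 + δ ^ 2) → False := by
    intro α β γ δ hcop hbe he
    have hα : α ≠ 0 := by rintro rfl; simp at hbe; exact hb hbe
    have hβ : β ≠ 0 := by rintro rfl; simp at hbe; exact hb hbe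
    have hγ : γ ≠ 0 := by rintro rfl; simp at hbe; exact hb hbe
    have hδ : δ ≠ 0 := by rintro rfl; simp at hbe; exact hb hbe
    have hdv : β ^ 2 ∣ (γ * (α ^ 2 + δ ^ 2)) ^ 2 :=
      ⟨(α ^ 2 + δ ^ 2) * (α ^ 2 + 9 * δ ^ 2), by linear_combination (-(α ^ 2 + δ ^ 2)) * he⟩
    rw [Int.pow_dvd_pow_iff (by norm_num)] at hdv
    obtain ⟨v, hv⟩ := hdv
    refine ih (α * δ).natAbs ?_ α δ v rfl hcop hα hδ ?_
    · rw [← hN, hbe]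
      have e : a * (2 * (α * β) * (γ * δ)) = (α * δ) * (2 * (a * β * γ)) := by ring
      rw [e, Int.natAbs_mul (α * δ)]
      have h1 : 0 < (α * δ).natAbs := Int.natAbs_pos.2 (mul_ne_zero hα hδ)
      have h2 : 0 < (a * β * γ).natAbs := Int.natAbs_pos.2 (mul_ne_zero (mul_ne_zero ha hβ) hγ)
      have h3 : 1 < (2 * (a * β * γ)).natAbs := by omega
      exact lt_mul_of_one_lt_right h1 h3
    · apply mul_left_cancel₀ (pow_ne_zero 2 hβ)
      have : (γ * (α ^ 2 + δ ^ 2)) ^ 2 = (β * v) ^ 2 := by rw [hv]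
      linear_combination (α ^ 2 + δ ^ 2) * he + this
  by_cases h3 : (3 : ℤ) ∣ a
  · obtain ⟨c, rfl⟩ := h3
    have hw3 : (3 : ℤ) ∣ w := by
      apply Int.prime_three.dvd_of_dvd_pow (n := 2)
      rw [← h]
      exact ⟨(9 * c ^ 2 + b ^ 2) * (3 * c ^ 2 + 3 * b ^ 2), by ring⟩
    obtain ⟨v, rfl⟩ := hw3
    have hc0 : c ≠ 0 := by rintro rfl; simp at ha
    refine ih (b * c).natAbs ?_ b c v rfl hc.of_mul_left_right.symm hb hc0 (by nlinarith)
    rw [← hN, mul_assoc, mul_comm c b, Int.natAbs_mul 3]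
    have h1 : 0 < (b * c).natAbs := Int.natAbs_pos.2 (mul_ne_zero hb hc0)
    simp only [Int.reduceAbs]
    omega
  obtain ⟨s, t, hs, ht⟩ := aux_squares a b w hc ha h
  have hc3 : IsCoprime a (3 * b) := by
    refine IsCoprime.mul_right ?_ hc
    exact ((Int.prime_three.coprime_iff_not_dvd).2 h3).symm
  obtain ⟨m, n, hmn, -, hg, hpar⟩ := PythagoreanTriple.coprime_classification.1
    (⟨by unfold PythagoreanTriple; linarith, Int.isCoprime_iff_gcd_eq_one.1 hc⟩ :
      PythagoreanTriple a b s ∧ Int.gcd a b = 1)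
  obtain ⟨p, q, hpq, -, hg', hpar'⟩ := PythagoreanTriple.coprime_classification.1
    (⟨by unfold PythagoreanTriple; linarith, Int.isCoprime_iff_gcd_eq_one.1 hc3⟩ :
      PythagoreanTriple a (3 * b) t ∧ Int.gcd a (3 * b) = 1)
  rw [← Int.isCoprime_iff_gcd_eq_one] at hg hg'
  have hoddd : ∀ m n : ℤ, (m % 2 = 0 ∧ n % 2 = 1 ∨ m % 2 = 1 ∧ n % 2 = 0) →
      (m ^ 2 - n ^ 2) % 2 = 1 := by
    rintro m n (⟨h1, h2⟩ | ⟨h1, h2⟩) <;> simp [pow_two, Int.sub_emod, Int.mul_emod, h1, h2]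
  have o1 := hoddd m n hpar
  have o2 := hoddd p q hpar'
  rcases hmn with ⟨e1, e2⟩ | ⟨e1, e2⟩ <;> rcases hpq with ⟨f1, f2⟩ | ⟨f1, f2⟩
  · have hprod : 3 * (m * n) = p * q := by linarith
    have hpq0 : p * q ≠ 0 := by
      intro h0; rw [h0] at hprod; apply hb; rw [e2]; linarith
    have hp0 := left_ne_zero_of_mul hpq0
    rcases Int.prime_three.dvd_or_dvd (Dvd.intro _ hprod) with ⟨p', rfl⟩ | ⟨q', rfl⟩
    · obtain ⟨α, β, γ, δ, rfl, rfl, rfl, rfl⟩ := aux_four m n p' q (by linarith)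
        (right_ne_zero_of_mul hp0)
      exact step δ γ β α hg.of_mul_left_left.of_mul_right_right.symm (by rw [e2]; ring)
        (by linarith)
    · obtain ⟨α, β, γ, δ, rfl, rfl, rfl, rfl⟩ := aux_four m n p q' (by linarith) hp0
      exact step α β γ δ hg.of_mul_left_left.of_mul_right_right e2
        (by linarith)
  · rw [mul_assoc] at f1; omega
  · rw [mul_assoc] at e1; omega
  · have hprod : m * n = p * q := by linarith
    have hp0 : p ≠ 0 := by rintro rfl; simp at f1; exact ha f1
    obtain ⟨α, β, γ, δ, rfl, rfl, rfl, rfl⟩ := aux_four m n p q hprod hp0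
    exact aux_even_case α β γ δ hpar hpar' (by linarith)

theorem E0_no_rational_point_with_square_x (x y : ℚ)
    (h : y ^ 2 = x * (x + 1) * (x + 9)) (hx : ∃ r : ℚ, x = r ^ 2) :
    x = 0 ∧ y = 0 := by
  obtain ⟨r, rfl⟩ := hx
  by_cases hr : r = 0
  · subst hr
    refine ⟨by norm_num, ?_⟩
    norm_num at h
    exact h
  exfalso
  have hd : (r.den : ℚ) ≠ 0 := by exact_mod_cast r.den_nz
  have hnd : r * r.den = r.num := Rat.mul_den_eq_num r
  have hsq : IsSquare ((((r.num ^ 2 + (r.den : ℤ) ^ 2) * (r.num ^ 2 + 9 * (r.den : ℤ) ^ 2) : ℤ)) : ℚ) := by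
    refine ⟨y / r * r.den ^ 2, ?_⟩
    push_cast
    rw [← hnd]
    field_simp
    linear_combination -h
  rw [Rat.isSquare_intCast_iff] at hsq
  obtain ⟨w, hw⟩ := hsq
  exact aux_main _ r.num r.den w rfl (Int.isCoprime_iff_gcd_eq_one.2 r.reduced)
    (Rat.num_ne_zero.2 hr) (by exact_mod_cast r.den_nz) (by rw [hw]; ring)
end
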